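/- arXiv:1903.01100 — 5 statements merged into one kernel-verified Lean document; each statement's English description precedes it below -/
import Mathlib

section
/- The space L¹([0,1]) does not embed isomorphically into ℓ¹: there is no continuous linear map T : L¹([0,1]) → ℓ¹ that is bounded below, i.e., there do not exist T continuous linear and a constant c > 0 such that c · ‖f‖_{L¹} ≤ ‖T f‖ for all f ∈ L¹([0,1]). -/
open MeasureTheory

open Filter Topology in
/-- Brezis--Lieb type lemma in `ℓ¹`. -/
theorem aux_bl (w : lp (fun _ : ℕ => ℝ) 1) (v : ℕ → lp (fun _ : ℕ => ℝ) 1)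
    (hv : ∀ k, Tendsto (fun n => v n k) atTop (𝓝 0)) :
    Tendsto (fun n => ‖w + v n‖ - ‖v n‖) atTop (𝓝 ‖w‖) := by
  have hn : ∀ u : lp (fun _ : ℕ => ℝ) 1, HasSum (fun k => |u k|) ‖u‖ := by
    intro u
    have := lp.hasSum_norm (p := 1) (by norm_num) u
    simpa using this
  have key : Tendsto (fun n => ∑' k, (|w k + v n k| - |v n k|)) atTop (𝓝 (∑' k, |w k|)) := by
    refine tendsto_tsum_of_dominated_convergence (bound := fun k => |w k|) (hn w).summable ?_ ?_
    · intro k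
      have h1 : Tendsto (fun n => |w k + v n k| - |v n k|) atTop (𝓝 (|w k + 0| - |0|)) :=
        ((tendsto_const_nhds.add (hv k)).abs).sub (hv k).abs
      simpa using h1
    · refine Eventually.of_forall fun n k => ?_
      have := abs_abs_sub_abs_le_abs_sub (w k + v n k) (v n k)
      simpa using this
  rw [(hn w).tsum_eq] at key
  refine key.congr fun n => ?_
  have := (hn (w + v n)).sub (hn (v n))
  rw [← this.tsum_eq]
  rfl

open Filter Topology in
theorem aux_hump (v : ℕ → lp (fun _ : ℕ => ℝ) 1)
    (hv : ∀ k, Tendsto (fun n => v n k) atTop (𝓝 0)) (c : ℝ) (hc : 0 < c)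
    (hvc : ∀ n, c ≤ ‖v n‖) (N : ℕ) :
    ∃ F : Finset ℕ, F.card = N ∧ N * (c / 2) ≤ ‖∑ n ∈ F, v n‖ := by
  induction N with
  | zero => exact ⟨∅, by simp⟩
  | succ N ih =>
    obtain ⟨F, hF, hle⟩ := ih
    have h1 := aux_bl (∑ n ∈ F, v n) v hv
    have h2 := h1.eventually (lt_mem_nhds (show ‖∑ n ∈ F, v n‖ - c / 2 < _ by linarith))
    obtain ⟨n, hn, hnF⟩ := (h2.and (eventually_gt_atTop (F.sup id))).exists
    have hnot : n ∉ F := fun h => absurd (Finset.le_sup (f := id) h) (by simpa using hnF)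
    refine ⟨insert n F, by simp [hnot, hF], ?_⟩
    rw [Finset.sum_insert hnot, add_comm (v n)]
    have := hvc n
    push_cast
    linarith

theorem aux_cos_int (k : ℤ) (hk : k ≠ 0) : ∫ x in (0:ℝ)..1, Real.cos (k * Real.pi * x) = 0 := by
  have hk' : (k * Real.pi : ℝ) ≠ 0 := mul_ne_zero (by exact_mod_cast hk) Real.pi_ne_zero
  rw [intervalIntegral.integral_comp_mul_left (fun x => Real.cos x) hk']
  simp [Real.sin_int_mul_pi]

theorem aux_orth (m n : ℕ) :
    ∫ x in (0:ℝ)..1, Real.cos ((m + 1 : ℕ) * Real.pi * x) * Real.cos ((n + 1 : ℕ) * Real.pi * x)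
      = if m = n then 1 / 2 else 0 := by
  have h : ∀ x : ℝ, Real.cos ((m + 1 : ℕ) * Real.pi * x) * Real.cos ((n + 1 : ℕ) * Real.pi * x)
      = (1 / 2) * (Real.cos (((m - n : ℤ) : ℝ) * Real.pi * x)
        + Real.cos (((m + n + 2 : ℤ) : ℝ) * Real.pi * x)) := by
    intro x
    have e1 : ((m - n : ℤ) : ℝ) * Real.pi * x
        = (m + 1 : ℕ) * Real.pi * x - (n + 1 : ℕ) * Real.pi * x := by push_cast; ring
    have e2 : ((m + n + 2 : ℤ) : ℝ) * Real.pi * x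
        = (m + 1 : ℕ) * Real.pi * x + (n + 1 : ℕ) * Real.pi * x := by push_cast; ring
    rw [e1, e2, Real.cos_add, Real.cos_sub]
    ring
  simp_rw [h]
  rw [intervalIntegral.integral_const_mul, intervalIntegral.integral_add
    (Continuous.intervalIntegrable (by fun_prop) _ _)
    (Continuous.intervalIntegrable (by fun_prop) _ _), aux_cos_int (m + n + 2) (by omega)]
  split_ifs with hmn
  · subst hmn; simp
  · rw [aux_cos_int (m - n) (by omega)]; simp

/-- The cosine functions. -/
noncomputable def auxCos (n : ℕ) : C(Set.Icc (0:ℝ) 1, ℝ) :=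
  ⟨fun x => Real.cos ((n + 1 : ℕ) * Real.pi * x), by fun_prop⟩

theorem aux_integral (g : ℝ → ℝ) :
    ∫ x : Set.Icc (0:ℝ) 1, g x = ∫ x in (0:ℝ)..1, g x := by
  rw [integral_subtype measurableSet_Icc g, integral_Icc_eq_integral_Ioc,
    intervalIntegral.integral_of_le zero_le_one]

theorem aux_orth' (m n : ℕ) :
    ∫ x : Set.Icc (0:ℝ) 1, auxCos m x * auxCos n x = if m = n then 1 / 2 else 0 := by
  rw [← aux_orth m n]
  exact aux_integral
    (fun x => Real.cos ((m + 1 : ℕ) * Real.pi * x) * Real.cos ((n + 1 : ℕ) * Real.pi * x))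

theorem aux_cint (g : C(Set.Icc (0:ℝ) 1, ℝ)) :
    Integrable (fun x => g x) (volume : Measure (Set.Icc (0:ℝ) 1)) :=
  g.continuous.integrable_of_hasCompactSupport (HasCompactSupport.of_compactSpace _)

theorem aux_norm (g : C(Set.Icc (0:ℝ) 1, ℝ)) :
    ‖ContinuousMap.toLp (E := ℝ) 1 (volume : Measure (Set.Icc (0:ℝ) 1)) ℝ g‖ = ∫ x, |g x| := by
  rw [L1.norm_eq_integral_norm]
  refine integral_congr_ae ?_
  filter_upwards [ContinuousMap.coeFn_toLp (p := 1) (𝕜 := ℝ)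
    (volume : Measure (Set.Icc (0:ℝ) 1)) g] with x hx
  rw [hx, Real.norm_eq_abs]

theorem aux_lower (n : ℕ) :
    1 / 2 ≤ ‖ContinuousMap.toLp (E := ℝ) 1 (volume : Measure (Set.Icc (0:ℝ) 1)) ℝ (auxCos n)‖ := by
  rw [aux_norm]
  have := aux_orth' n n
  rw [if_pos rfl] at this
  rw [← this]
  refine integral_mono (aux_cint (auxCos n * auxCos n)) (aux_cint (auxCos n)).abs fun x => ?_
  have h1 : |auxCos n x| ≤ 1 := Real.abs_cos_le_one _
  have h2 := abs_nonneg (auxCos n x)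
  have h3 := abs_mul_abs_self (auxCos n x)
  show auxCos n x * auxCos n x ≤ |auxCos n x|
  nlinarith

theorem aux_upper (F : Finset ℕ) (a : ℕ → ℝ) :
    ‖ContinuousMap.toLp (E := ℝ) 1 (volume : Measure (Set.Icc (0:ℝ) 1)) ℝ
      (∑ n ∈ F, a n • auxCos n)‖ ^ 2 ≤ ∑ n ∈ F, a n ^ 2 := by
  set g : C(Set.Icc (0:ℝ) 1, ℝ) := ∑ n ∈ F, a n • auxCos n with hg
  rw [aux_norm]
  have hsq : ∫ x, g x * g x = (1 / 2) * ∑ n ∈ F, a n ^ 2 := by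
    have : ∀ x, g x * g x = ∑ m ∈ F, ∑ n ∈ F, (a m * a n) * (auxCos m x * auxCos n x) := by
      intro x
      have : g x = ∑ n ∈ F, a n * auxCos n x := by simp [hg]
      rw [this, Finset.sum_mul_sum]
      refine Finset.sum_congr rfl fun m _ => Finset.sum_congr rfl fun n _ => by ring
    simp_rw [this]
    have hi : ∀ m n, Integrable (fun x => (a m * a n) * (auxCos m x * auxCos n x))
        (volume : Measure (Set.Icc (0:ℝ) 1)) := fun m n =>
      (aux_cint (auxCos m * auxCos n)).const_mul _
    rw [integral_finsetSum _ fun m _ => integrable_finsetSum _ fun n _ => hi m n, Finset.mul_sum]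
    refine Finset.sum_congr rfl fun m hm => ?_
    rw [integral_finsetSum _ fun n _ => hi m n]
    simp_rw [integral_const_mul, aux_orth']
    simp [hm]
    ring
  have hI := aux_cint g
  have hI2 : Integrable (fun x => g x * g x) (volume : Measure (Set.Icc (0:ℝ) 1)) :=
    aux_cint (g * g)
  set t := ∫ x, |g x| with ht
  have h0 : 0 ≤ ∫ x, (|g x| - t) ^ 2 := integral_nonneg fun x => sq_nonneg _
  have h1 : ∫ x, (|g x| - t) ^ 2 = (∫ x, g x * g x) - 2 * t * t + t ^ 2 := by
    have : ∀ x, (|g x| - t) ^ 2 = g x * g x - 2 * t * |g x| + t ^ 2 := by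
      intro x
      have := abs_mul_abs_self (g x)
      nlinarith
    simp_rw [this]
    have hI3 : Integrable (fun x => g x * g x - 2 * t * |g x|)
        (volume : Measure (Set.Icc (0:ℝ) 1)) := hI2.sub (hI.abs.const_mul _)
    rw [integral_add hI3 (integrable_const _),
      integral_sub hI2 (hI.abs.const_mul _), integral_const_mul]
    simp [ht]
  have h2 : 0 ≤ ∑ n ∈ F, a n ^ 2 := Finset.sum_nonneg fun n _ => sq_nonneg _
  nlinarith

/-- `L¹([0,1])` does not embed isomorphically into `ℓ¹`: there is no continuous linear map
`T : L¹([0,1]) → ℓ¹` that is bounded below. -/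
theorem L1_not_embed_in_l1 :
    ¬ ∃ (T : Lp ℝ 1 (volume : Measure (Set.Icc (0:ℝ) 1)) →L[ℝ] lp (fun _ : ℕ => ℝ) 1)
        (c : ℝ), 0 < c ∧
        ∀ f : Lp ℝ 1 (volume : Measure (Set.Icc (0:ℝ) 1)), c * ‖f‖ ≤ ‖T f‖ := by
  rintro ⟨T, c, hc, hT⟩
  set L := ContinuousMap.toLp (E := ℝ) 1 (volume : Measure (Set.Icc (0:ℝ) 1)) ℝ with hL
  set v : ℕ → lp (fun _ : ℕ => ℝ) 1 := fun n => T (L (auxCos n)) with hvdef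
  have hsum : ∀ (F : Finset ℕ) (a : ℕ → ℝ),
      ‖∑ n ∈ F, a n • v n‖ ^ 2 ≤ ‖T‖ ^ 2 * ∑ n ∈ F, a n ^ 2 := by
    intro F a
    have h1 : ∑ n ∈ F, a n • v n = T (L (∑ n ∈ F, a n • auxCos n)) := by
      simp [hvdef, map_sum]
    rw [h1]
    calc _ ≤ (‖T‖ * ‖L (∑ n ∈ F, a n • auxCos n)‖) ^ 2 := by
          gcongr; exact T.le_opNorm _
      _ = ‖T‖ ^ 2 * ‖L (∑ n ∈ F, a n • auxCos n)‖ ^ 2 := by ring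
      _ ≤ _ := by gcongr; exact aux_upper F a
  have hv : ∀ k, Filter.Tendsto (fun n => v n k) Filter.atTop (nhds 0) := by
    intro k
    have hs : Summable fun n => (v n k) ^ 2 := by
      refine summable_of_sum_le (c := ‖T‖ ^ 2) (fun n => sq_nonneg _) fun F => ?_
      have h1 := hsum F (fun n => v n k)
      have h2 : ∑ n ∈ F, (v n k) ^ 2 = (∑ n ∈ F, v n k • v n : lp (fun _ : ℕ => ℝ) 1) k := by
        rw [lp.coeFn_sum, Finset.sum_apply]
        refine Finset.sum_congr rfl fun n _ => ?_
        rw [lp.coeFn_smul, Pi.smul_apply, smul_eq_mul, sq]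
      have h3 := lp.norm_apply_le_norm one_ne_zero (∑ n ∈ F, v n k • v n : lp (fun _ : ℕ => ℝ) 1) k
      rw [← h2] at h3
      have h0 : 0 ≤ ∑ n ∈ F, (v n k) ^ 2 := Finset.sum_nonneg fun n _ => sq_nonneg _
      rw [Real.norm_of_nonneg h0] at h3
      by_contra! hcon
      have h4 := pow_le_pow_left₀ h0 h3 2
      nlinarith [sq_nonneg ‖T‖]
    have := hs.tendsto_atTop_zero
    have h2 := this.sqrt
    simp_rw [Real.sqrt_sq_eq_abs, Real.sqrt_zero] at h2
    exact (tendsto_zero_iff_abs_tendsto_zero _).2 h2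
  have hvc : ∀ n, c / 2 ≤ ‖v n‖ := fun n =>
    le_trans (by nlinarith [aux_lower n]) (hT (L (auxCos n)))
  obtain ⟨N, hN⟩ := exists_nat_gt (‖T‖ ^ 2 / (c / 2 / 2) ^ 2)
  obtain ⟨F, hF, hle⟩ := aux_hump v hv (c / 2) (by positivity) hvc N
  have h1 := hsum F (fun _ => 1)
  simp only [one_smul, one_pow, Finset.sum_const, hF, nsmul_eq_mul, mul_one] at h1
  have h2 := pow_le_pow_left₀ (by positivity) hle 2
  rw [div_lt_iff₀ (by positivity)] at hN
  have hN0 : (0:ℝ) < N := by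
    rcases Nat.eq_zero_or_pos N with h | h
    · subst h; nlinarith [sq_nonneg ‖T‖]
    · exact_mod_cast h
  have h3 : (N:ℝ) * (N * (c / 2 / 2) ^ 2) ≤ N * ‖T‖ ^ 2 := by nlinarith
  have := le_of_mul_le_mul_left h3 hN0
  linarith
end

section
/- The space ℓ² does not embed isomorphically into ℓ¹: there is no continuous linear map T : ℓ² → ℓ¹ that is bounded below, i.e., there do not exist T continuous linear and a constant c > 0 such that c · ‖a‖_{ℓ²} ≤ ‖T a‖_{ℓ¹} for all a ∈ ℓ². -/
open Filter Topology in
lemma aux_coord (f : lp (fun _ : ℕ => ℝ) 2 →L[ℝ] ℝ) :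
    Tendsto (fun n => f (lp.single 2 n (1:ℝ))) atTop (𝓝 0) := by
  set g := (InnerProductSpace.toDual ℝ (lp (fun _ : ℕ => ℝ) 2)).symm f with hg
  have h1 : ∀ n, f (lp.single 2 n (1:ℝ)) = g n := by
    intro n
    rw [← InnerProductSpace.toDual_symm_apply (𝕜 := ℝ) (y := f), lp.inner_single_right]
    simp [hg]
  simp_rw [h1]
  have h2 := (lp.hasSum_norm (p := 2) (by norm_num) g).summable.tendsto_atTop_zero
  have h3 : Tendsto (fun n => (g n) ^ 2) atTop (𝓝 0) := by
    refine h2.congr fun n => ?_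
    simp
  have h4 := h3.sqrt
  simp only [Real.sqrt_sq_eq_abs, Real.sqrt_zero] at h4
  exact (tendsto_zero_iff_abs_tendsto_zero _).2 h4

lemma aux_norm_s2 (y : lp (fun _ : ℕ => ℝ) 1) : HasSum (fun k => |y k|) ‖y‖ := by
  simpa using lp.hasSum_norm (p := 1) (by norm_num) y

open Filter Topology in
lemma aux_step (x : ℕ → lp (fun _ : ℕ => ℝ) 1) (hx : ∀ k, Tendsto (fun n => x n k) atTop (𝓝 0))
    (c : ℝ) (hc : 0 < c) (hxc : ∀ n, c ≤ ‖x n‖) (y : lp (fun _ : ℕ => ℝ) 1) :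
    ∀ᶠ n in atTop, ‖y‖ + c / 2 ≤ ‖y + x n‖ := by
  have hb : ∀ n k, ‖min |y k| |x n k|‖ ≤ |y k| := by
    intro n k
    rw [Real.norm_of_nonneg (by positivity)]
    exact min_le_left _ _
  have h : Tendsto (fun n => ∑' k, min |y k| |x n k|) atTop (𝓝 (∑' _ : ℕ, (0:ℝ))) := by
    refine tendsto_tsum_of_dominated_convergence (aux_norm_s2 y).summable ?_
      (Eventually.of_forall hb)
    intro k
    have := (tendsto_const_nhds (x := |y k|)).min (hx k).abs
    simpa using this
  rw [tsum_zero] at h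
  filter_upwards [h.eventually (gt_mem_nhds (show (0:ℝ) < c / 4 by positivity))] with n hn
  have hs : Summable (fun k => min |y k| |x n k|) :=
    Summable.of_norm_bounded (aux_norm_s2 y).summable (hb n)
  have h1 := ((aux_norm_s2 y).add (aux_norm_s2 (x n))).sub (hs.hasSum.mul_left 2)
  have h2 := hasSum_le (fun k => ?_) h1 (aux_norm_s2 (y + x n))
  · linarith [hxc n]
  · simp only [lp.coeFn_add, Pi.add_apply]
    have e1 := abs_sub_abs_le_abs_sub (y k) (-x n k)
    have e2 := abs_sub_abs_le_abs_sub (x n k) (-y k)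
    rw [abs_neg, sub_neg_eq_add] at e1 e2
    rw [add_comm (x n k)] at e2
    rcases min_cases |y k| |x n k| with h | h <;> linarith

/-- `ℓ²` does not embed isomorphically into `ℓ¹`: there is no continuous linear map
`T : ℓ² → ℓ¹` that is bounded below. -/
theorem l2_not_embed_in_l1 :
    ¬ ∃ (T : lp (fun _ : ℕ => ℝ) 2 →L[ℝ] lp (fun _ : ℕ => ℝ) 1) (c : ℝ), 0 < c ∧
        ∀ a : lp (fun _ : ℕ => ℝ) 2, c * ‖a‖ ≤ ‖T a‖ := by
  rintro ⟨T, c, hc, hT⟩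
  have hx : ∀ k, Filter.Tendsto (fun n => T (lp.single 2 n (1:ℝ)) k) Filter.atTop (nhds 0) :=
    fun k => aux_coord ((lp.evalCLM ℝ (fun _ : ℕ => ℝ) 1 k).comp T)
  have hxc : ∀ n, c ≤ ‖T (lp.single 2 n (1:ℝ))‖ := by
    intro n
    have := hT (lp.single 2 n (1:ℝ))
    rwa [lp.norm_single (by norm_num), norm_one, mul_one] at this
  have key : ∀ N : ℕ, ∃ s : Finset ℕ, s.card = N ∧
      N * (c / 2) ≤ ‖T (∑ n ∈ s, lp.single 2 n (1:ℝ))‖ := by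
    intro N
    induction N with
    | zero => exact ⟨∅, by simp⟩
    | succ N ih =>
      obtain ⟨s, hs, h⟩ := ih
      obtain ⟨n, hn, hns⟩ := ((aux_step _ hx c hc hxc (T (∑ n ∈ s, lp.single 2 n (1:ℝ)))).and
        (Filter.eventually_gt_atTop (s.sup id))).exists
      have hn' : n ∉ s := fun hm => absurd (Finset.le_sup (f := id) hm) (not_le.2 hns)
      refine ⟨insert n s, by simp [hn', hs], ?_⟩
      rw [Finset.sum_insert hn', map_add, add_comm (T _)]
      push_cast
      linarith
  obtain ⟨N, hN⟩ := exists_nat_gt ((‖T‖ / (c / 2)) ^ 2)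
  obtain ⟨s, hs, h⟩ := key N
  have h1 : ‖∑ n ∈ s, lp.single (E := fun _ : ℕ => ℝ) 2 n (1:ℝ)‖ ^ 2 = N := by
    have := lp.norm_sum_single (E := fun _ : ℕ => ℝ) (p := 2) (by norm_num) (fun _ => (1:ℝ)) s
    simpa [hs] using this
  have h2 := h.trans (T.le_opNorm _)
  have h3 := pow_le_pow_left₀ (by positivity) h2 2
  rw [mul_pow, mul_pow, h1] at h3
  rw [div_pow, div_lt_iff₀ (by positivity)] at hN
  have hN0 : (0:ℝ) < N := by
    rcases Nat.eq_zero_or_pos N with h0 | h0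
    · subst h0
      have := sq_nonneg ‖T‖
      simp at hN
      linarith
    · exact_mod_cast h0
  nlinarith
end

section
/- Khintchine inequality in L¹ for Rademacher functions: there exists a constant c > 0 such that for every n ∈ ℕ and every a : Fin n → ℝ, c · (Σ_{k<n} (a k)²)^{1/2} ≤ ∫₀¹ |Σ_{k<n} a k · r k t| dt ≤ (Σ_{k<n} (a k)²)^{1/2}, where r k t = (−1)^{⌊2^{k+1} t⌋} is the k-th Rademacher function. -/
/-- The `k`-th Rademacher function `r k t = (−1)^⌊2^(k+1) t⌋`. -/
noncomputable def rademacher (k : ℕ) (t : ℝ) : ℝ :=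
  (-1 : ℝ) ^ ⌊(2 : ℝ) ^ (k + 1) * t⌋

open MeasureTheory in
lemma rad_measurable (k : ℕ) : Measurable (rademacher k) := by
  unfold rademacher
  have h : Measurable (fun z : ℤ => (-1 : ℝ) ^ z) := measurable_from_top
  exact h.comp (Int.measurable_floor.comp (measurable_const.mul measurable_id))

lemma rad_abs (k : ℕ) (t : ℝ) : |rademacher k t| = 1 := by
  unfold rademacher
  rw [abs_zpow]; simp

lemma rad_succ (k : ℕ) (t : ℝ) : rademacher (k + 1) t = rademacher k (2 * t) := by
  unfold rademacher
  congr 2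
  ring

lemma rad_periodic (k : ℕ) (t : ℝ) : rademacher k (t + 1) = rademacher k t := by
  unfold rademacher
  have : (2 : ℝ) ^ (k + 1) * (t + 1) = 2 ^ (k + 1) * t + ((2 ^ (k + 1) : ℤ) : ℝ) := by
    push_cast; ring
  rw [this, Int.floor_add_intCast, zpow_add₀ (by norm_num)]
  have h : Even ((2 : ℤ) ^ (k + 1)) := by
    rw [pow_succ]; exact even_two.mul_left _
  rw [h.neg_one_zpow, mul_one]

lemma rad_zero_left (t : ℝ) (h0 : 0 < t) (h1 : t < 1 / 2) : rademacher 0 t = 1 := by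
  unfold rademacher
  have : ⌊(2 : ℝ) ^ (0 + 1) * t⌋ = 0 := by
    rw [Int.floor_eq_iff]; constructor <;> norm_num <;> linarith
  rw [this]; simp

lemma rad_zero_right (t : ℝ) (h0 : 1 / 2 < t) (h1 : t < 1) : rademacher 0 t = -1 := by
  unfold rademacher
  have : ⌊(2 : ℝ) ^ (0 + 1) * t⌋ = 1 := by
    rw [Int.floor_eq_iff]; constructor <;> norm_num <;> linarith
  rw [this]; simp

/-- Rademacher sum. -/
noncomputable def radSum (n : ℕ) (a : Fin n → ℝ) (t : ℝ) : ℝ := ∑ k, a k * rademacher k t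

lemma radSum_measurable (n : ℕ) (a : Fin n → ℝ) : Measurable (radSum n a) := by
  unfold radSum
  exact Finset.measurable_sum _ (fun k _ => (rad_measurable k).const_mul _)

lemma radSum_bdd (n : ℕ) (a : Fin n → ℝ) (t : ℝ) : |radSum n a t| ≤ ∑ k, |a k| := by
  unfold radSum
  refine (Finset.abs_sum_le_sum_abs _ _).trans (le_of_eq ?_)
  simp [abs_mul, rad_abs]

lemma radSum_periodic (n : ℕ) (a : Fin n → ℝ) : Function.Periodic (radSum n a) 1 := by
  intro t
  simp [radSum, rad_periodic]

lemma radSum_succ (n : ℕ) (a : Fin (n + 1) → ℝ) (t : ℝ) :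
    radSum (n + 1) a t = a 0 * rademacher 0 t + radSum n (fun k => a k.succ) (2 * t) := by
  simp [radSum, Fin.sum_univ_succ, rad_succ]

open MeasureTheory in
lemma radSum_int (n : ℕ) (a : Fin n → ℝ) (φ : ℝ → ℝ) (hφ : Continuous φ) (u v : ℝ) :
    IntervalIntegrable (fun t => φ (radSum n a t)) volume u v := by
  obtain ⟨C, hC⟩ := (isCompact_Icc (a := -(∑ k, |a k|)) (b := ∑ k, |a k|)).exists_bound_of_continuousOn
    hφ.continuousOn
  refine (intervalIntegrable_const (c := C)).mono_fun
    (hφ.measurable.comp (radSum_measurable n a)).aestronglyMeasurable ?_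
  refine Filter.Eventually.of_forall fun t => ?_
  exact (hC _ (abs_le.1 (radSum_bdd n a t))).trans (Real.norm_eq_abs C ▸ le_abs_self C)

open MeasureTheory in
lemma radSum_step (n : ℕ) (a : Fin (n + 1) → ℝ) (φ : ℝ → ℝ) (hφ : Continuous φ) :
    (∫ t in (0:ℝ)..1, φ (radSum (n + 1) a t)) =
      ∫ t in (0:ℝ)..1, (φ (a 0 + radSum n (fun k => a k.succ) t)
        + φ (-a 0 + radSum n (fun k => a k.succ) t)) / 2 := by
  set b : Fin n → ℝ := fun k => a k.succ with hb
  have i1 : IntervalIntegrable (fun t => φ (a 0 + radSum n b t)) volume 0 1 :=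
    radSum_int n b (fun x => φ (a 0 + x)) (by fun_prop) 0 1
  have i2 : IntervalIntegrable (fun t => φ (-a 0 + radSum n b t)) volume 0 1 :=
    radSum_int n b (fun x => φ (-a 0 + x)) (by fun_prop) 0 1
  have e1 : (∫ t in (0:ℝ)..(1/2), φ (radSum (n + 1) a t))
      = ∫ t in (0:ℝ)..(1/2), (fun s => φ (a 0 + radSum n b s)) (2 * t) := by
    apply intervalIntegral.integral_congr_Ioo_of_le (by norm_num)
    intro t ht
    simp [radSum_succ, rad_zero_left t ht.1 ht.2, hb]
  have e2 : (∫ t in (1/2:ℝ)..1, φ (radSum (n + 1) a t))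
      = ∫ t in (1/2:ℝ)..1, (fun s => φ (-a 0 + radSum n b s)) (2 * t) := by
    apply intervalIntegral.integral_congr_Ioo_of_le (by norm_num)
    intro t ht
    simp [radSum_succ, rad_zero_right t ht.1 ht.2, hb]
  have p : Function.Periodic (fun s => φ (-a 0 + radSum n b s)) 1 := by
    intro t
    simp only [radSum_periodic n b t]
  have e3 := p.intervalIntegral_add_eq 1 0
  rw [← intervalIntegral.integral_add_adjacent_intervals
    (radSum_int (n+1) a φ hφ 0 (1/2)) (radSum_int (n+1) a φ hφ (1/2) 1), e1, e2,
    intervalIntegral.integral_comp_mul_left (fun s => φ (a 0 + radSum n b s)) (two_ne_zero),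
    intervalIntegral.integral_comp_mul_left (fun s => φ (-a 0 + radSum n b s)) (two_ne_zero),
    intervalIntegral.integral_div, intervalIntegral.integral_add i1 i2]
  norm_num at e3 ⊢
  rw [e3]
  ring

lemma radSum_sq (n : ℕ) (a : Fin n → ℝ) :
    (∫ t in (0:ℝ)..1, radSum n a t ^ 2) = ∑ k, a k ^ 2 := by
  induction n with
  | zero => simp [radSum]
  | succ n ih =>
    rw [radSum_step n a (fun x => x ^ 2) (by fun_prop), Fin.sum_univ_succ,
      ← ih (fun k => a k.succ)]
    have : ∀ t, ((a 0 + radSum n (fun k => a k.succ) t) ^ 2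
        + (-a 0 + radSum n (fun k => a k.succ) t) ^ 2) / 2
        = a 0 ^ 2 + radSum n (fun k => a k.succ) t ^ 2 := by intro t; ring
    simp only [this]
    rw [intervalIntegral.integral_add (by simp)
      (radSum_int n _ (fun x => x ^ 2) (by fun_prop) 0 1)]
    simp

lemma radSum_four (n : ℕ) (a : Fin n → ℝ) :
    (∫ t in (0:ℝ)..1, radSum n a t ^ 4) ≤ 3 * (∑ k, a k ^ 2) ^ 2 := by
  induction n with
  | zero => simp [radSum]
  | succ n ih =>
    rw [radSum_step n a (fun x => x ^ 4) (by fun_prop), Fin.sum_univ_succ]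
    have h := ih (fun k => a k.succ)
    have h2 := radSum_sq n (fun k => a k.succ)
    have : ∀ t, ((a 0 + radSum n (fun k => a k.succ) t) ^ 4
        + (-a 0 + radSum n (fun k => a k.succ) t) ^ 4) / 2
        = (a 0 ^ 4 + 6 * a 0 ^ 2 * radSum n (fun k => a k.succ) t ^ 2)
          + radSum n (fun k => a k.succ) t ^ 4 := by intro t; ring
    simp only [this]
    rw [intervalIntegral.integral_add
      (radSum_int n _ (fun x => a 0 ^ 4 + 6 * a 0 ^ 2 * x ^ 2) (by fun_prop) 0 1)
      (radSum_int n _ (fun x => x ^ 4) (by fun_prop) 0 1),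
      intervalIntegral.integral_add (by simp)
      (radSum_int n _ (fun x => 6 * a 0 ^ 2 * x ^ 2) (by fun_prop) 0 1),
      intervalIntegral.integral_const_mul, h2]
    simp only [intervalIntegral.integral_const, smul_eq_mul]
    nlinarith [sq_nonneg (a 0 ^ 2)]

/-- Khintchine inequality in `L¹` for the Rademacher functions: there is a constant `c > 0`
such that for every `n` and every `a : Fin n → ℝ`,
`c · (Σ (a k)²)^{1/2} ≤ ∫₀¹ |Σ a k · r k t| dt ≤ (Σ (a k)²)^{1/2}`. -/
theorem khintchine_L1_rademacher :
    ∃ c : ℝ, 0 < c ∧ ∀ (n : ℕ) (a : Fin n → ℝ),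
      c * Real.sqrt (∑ k, a k ^ 2) ≤ (∫ t in (0:ℝ)..1, |∑ k, a k * rademacher k t|) ∧
      (∫ t in (0:ℝ)..1, |∑ k, a k * rademacher k t|) ≤ Real.sqrt (∑ k, a k ^ 2) := by
  refine ⟨5 / 9, by norm_num, fun n a => ?_⟩
  change _ ≤ (∫ t in (0:ℝ)..1, |radSum n a t|) ∧ (∫ t in (0:ℝ)..1, |radSum n a t|) ≤ _
  have hs0 : 0 ≤ ∑ k, a k ^ 2 := Finset.sum_nonneg fun k _ => sq_nonneg _
  have h2 := radSum_sq n a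
  have h4 := radSum_four n a
  rcases hs0.eq_or_lt with h | h
  · have ha : ∀ k, a k = 0 := by
      intro k
      have := (Finset.sum_eq_zero_iff_of_nonneg (fun k _ => sq_nonneg (a k))).1 h.symm k
        (Finset.mem_univ k)
      exact pow_eq_zero_iff (by norm_num) |>.1 this
    simp [radSum, ha]
  set σ := Real.sqrt (∑ k, a k ^ 2) with hσ
  have hσ0 : 0 < σ := Real.sqrt_pos.2 h
  have hσ2 : ∑ k, a k ^ 2 = σ ^ 2 := (Real.sq_sqrt hs0).symm
  rw [hσ2] at h2 h4
  have iabs := radSum_int n a (fun x => |x|) (by fun_prop) 0 1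
  constructor
  · have key : (∫ t in (0:ℝ)..1, (σ⁻¹ * radSum n a t ^ 2 - 4 / 27 * σ⁻¹ ^ 3 * radSum n a t ^ 4))
        ≤ ∫ t in (0:ℝ)..1, |radSum n a t| := by
      refine intervalIntegral.integral_mono_on (by norm_num)
        (radSum_int n a (fun x => σ⁻¹ * x ^ 2 - 4 / 27 * σ⁻¹ ^ 3 * x ^ 4) (by fun_prop) 0 1)
        iabs fun t _ => ?_
      generalize radSum n a t = x
      have hu : 0 ≤ σ⁻¹ * |x| := by positivity
      set u := σ⁻¹ * |x| with hu'
      have e : σ⁻¹ * x ^ 2 - 4 / 27 * σ⁻¹ ^ 3 * x ^ 4 = |x| * (u - 4 / 27 * u ^ 3) := by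
        have e2 : x ^ 2 = |x| ^ 2 := (sq_abs x).symm
        have e4 : x ^ 4 = |x| ^ 4 := by rw [show x ^ 4 = (x ^ 2) ^ 2 by ring, e2]; ring
        rw [e2, e4, hu']; ring
      rw [e]
      have : u - 4 / 27 * u ^ 3 ≤ 1 := by
        nlinarith [mul_nonneg (sq_nonneg (u - 3 / 2)) (show 0 ≤ u + 3 by linarith)]
      nlinarith [abs_nonneg x]
    rw [intervalIntegral.integral_sub
      (radSum_int n a (fun x => σ⁻¹ * x ^ 2) (by fun_prop) 0 1)
      (radSum_int n a (fun x => 4 / 27 * σ⁻¹ ^ 3 * x ^ 4) (by fun_prop) 0 1),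
      intervalIntegral.integral_const_mul, intervalIntegral.integral_const_mul, h2] at key
    have hm := mul_le_mul_of_nonneg_left h4 (show 0 ≤ 4 / 27 * σ⁻¹ ^ 3 by positivity)
    have e1 : σ⁻¹ * σ ^ 2 = σ := by field_simp
    have e2 : 4 / 27 * σ⁻¹ ^ 3 * (3 * (σ ^ 2) ^ 2) = 4 / 9 * σ := by field_simp; norm_num
    rw [e1] at key
    rw [e2] at hm
    linarith
  · have key : (∫ t in (0:ℝ)..1, |radSum n a t|)
        ≤ ∫ t in (0:ℝ)..1, (σ / 2 + σ⁻¹ / 2 * radSum n a t ^ 2) := by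
      refine intervalIntegral.integral_mono_on (by norm_num) iabs
        (radSum_int n a (fun x => σ / 2 + σ⁻¹ / 2 * x ^ 2) (by fun_prop) 0 1) fun t _ => ?_
      generalize radSum n a t = x
      have e : σ / 2 + σ⁻¹ / 2 * x ^ 2 - |x| = σ⁻¹ / 2 * (σ - |x|) ^ 2 := by
        rw [← sq_abs x]; field_simp; ring
      have : 0 ≤ σ⁻¹ / 2 * (σ - |x|) ^ 2 := by positivity
      linarith
    rw [intervalIntegral.integral_add (by simp)
      (radSum_int n a (fun x => σ⁻¹ / 2 * x ^ 2) (by fun_prop) 0 1),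
      intervalIntegral.integral_const_mul, h2] at key
    have e1 : σ⁻¹ / 2 * σ ^ 2 = σ / 2 := by field_simp
    rw [e1] at key
    simp only [intervalIntegral.integral_const, smul_eq_mul] at key
    linarith
end

section
/- (Cut lemma for weighted trees.) In the rooted-tree setting, let f : List ℕ → ℝ, let A₀ be a vertex and let c ∈ ℝ. Assume that f converges to c along every branch that passes through A₀. Define f̃ : List ℕ → ℝ by f̃ s = c if A₀ is a prefix of s, and f̃ s = f s otherwise. Then Var f̃ ≤ Var f. -/
/-- The set of vertices of the rooted tree determined by `children`:
the empty list is a vertex, and `s ++ [a]` is a vertex whenever `s` is a vertex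
and `a ∈ children s`. -/
inductive IsVertex (children : List ℕ → Finset ℕ) : List ℕ → Prop
  | nil : IsVertex children []
  | append (s : List ℕ) (a : ℕ) : IsVertex children s → a ∈ children s →
      IsVertex children (s ++ [a])

/-- The weighted tree variation
`Var f = Σ_{vertices s} Σ_{a ∈ children s} 3^{−(s.length+1)} · |f (s ++ [a]) − f s|`,
with values in `[0,∞]`. -/
noncomputable def treeVar (children : List ℕ → Finset ℕ) (f : List ℕ → ℝ) : ENNReal :=
  ∑' (s : {s : List ℕ // IsVertex children s}) (a : {a : ℕ // a ∈ children s.1}),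
    ENNReal.ofReal ((3 : ℝ)⁻¹ ^ (s.1.length + 1) * |f (s.1 ++ [a.1]) - f s.1|)

/-- `x : ℕ → ℕ` is a branch if each of its initial segments is a vertex. -/
def IsBranch (children : List ℕ → Finset ℕ) (x : ℕ → ℕ) : Prop :=
  ∀ n : ℕ, IsVertex children (List.ofFn (fun i : Fin n => x i))

/-- The branch `x` passes through the vertex `A` if `A` is the initial segment of `x`
of length `A.length`. -/
def PassesThrough (x : ℕ → ℕ) (A : List ℕ) : Prop :=
  A = List.ofFn (fun i : Fin A.length => x i)

/-- `f` converges to `c` along the branch `x` if `f [x 0, …, x (n−1)] → c` as `n → ∞`. -/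
def ConvergesAlong (f : List ℕ → ℝ) (x : ℕ → ℕ) (c : ℝ) : Prop :=
  Filter.Tendsto (fun n : ℕ => f (List.ofFn (fun i : Fin n => x i))) Filter.atTop (nhds c)

open Classical in
noncomputable def nodeVar (ch : List ℕ → Finset ℕ) (f : List ℕ → ℝ) (s : List ℕ) : ENNReal :=
  if IsVertex ch s then
    ∑ a ∈ ch s, ENNReal.ofReal ((3 : ℝ)⁻¹ ^ (s.length + 1) * |f (s ++ [a]) - f s|) else 0

theorem treeVar_eq (ch : List ℕ → Finset ℕ) (f : List ℕ → ℝ) :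
    treeVar ch f = ∑' s, nodeVar ch f s := by
  classical
  have h : ∀ s : {s : List ℕ // IsVertex ch s}, (∑' (a : {a : ℕ // a ∈ ch s.1}),
    ENNReal.ofReal ((3 : ℝ)⁻¹ ^ (s.1.length + 1) * |f (s.1 ++ [a.1]) - f s.1|))
      = nodeVar ch f s.1 := by
    intro s
    rw [nodeVar, if_pos s.2]
    exact Finset.tsum_subtype (ch s.1)
      (fun a => ENNReal.ofReal ((3 : ℝ)⁻¹ ^ (s.1.length + 1) * |f (s.1 ++ [a]) - f s.1|))
  unfold treeVar
  rw [tsum_congr h]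
  refine (tsum_subtype {s | IsVertex ch s} (nodeVar ch f)).trans (tsum_congr fun s => ?_)
  by_cases hs : IsVertex ch s
  · simp [Set.indicator, hs]
  · simp [Set.indicator, hs, nodeVar]

noncomputable def subVar (ch : List ℕ → Finset ℕ) (f : List ℕ → ℝ) (s : List ℕ) : ENNReal :=
  ∑' r, nodeVar ch f (s ++ r)

theorem subVar_ge (ch : List ℕ → Finset ℕ) (f : List ℕ → ℝ) (s : List ℕ) :
    nodeVar ch f s + ∑ a ∈ ch s, subVar ch f (s ++ [a]) ≤ subVar ch f s := by
  have h0 : ∑' r, nodeVar ch f (s ++ r) = nodeVar ch f (s ++ []) +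
      ∑' r, if r = [] then 0 else nodeVar ch f (s ++ r) := by
    rw [← tsum_ite_eq ([] : List ℕ) (fun r => nodeVar ch f (s ++ r)), ← ENNReal.tsum_add]
    refine tsum_congr fun r => ?_
    split_ifs <;> simp
  unfold subVar
  rw [h0]
  simp only [List.append_nil]
  gcongr
  rw [← Finset.tsum_subtype (ch s) (fun a => ∑' r, nodeVar ch f (s ++ [a] ++ r)),
    ← ENNReal.tsum_prod (f := fun (a : {a // a ∈ ch s}) r => nodeVar ch f (s ++ [a.1] ++ r))]
  have hi : Function.Injective (fun p : {a // a ∈ ch s} × List ℕ => p.1.1 :: p.2) := by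
    rintro ⟨⟨a, ha⟩, r⟩ ⟨⟨b, hb⟩, t⟩ h
    simp at h
    simp [h]
  refine le_trans (le_of_eq ?_) (ENNReal.tsum_comp_le_tsum_of_injective hi
    (fun r => if r = [] then 0 else nodeVar ch f (s ++ r)))
  refine tsum_congr fun p => ?_
  simp

theorem exists_step (ch : List ℕ → Finset ℕ) (f : List ℕ → ℝ) (s : List ℕ)
    (hs : IsVertex ch s) (hc : 3 ≤ (ch s).card) :
    ∃ a ∈ ch s, ENNReal.ofReal |f (s ++ [a]) - f s|
      + 3 ^ (s.length + 1) * subVar ch f (s ++ [a]) ≤ 3 ^ s.length * subVar ch f s := by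
  obtain ⟨a, ha, hmin⟩ := Finset.exists_min_image (ch s)
    (fun a => ENNReal.ofReal ((3 : ℝ)⁻¹ ^ (s.length + 1) * |f (s ++ [a]) - f s|)
      + subVar ch f (s ++ [a])) (Finset.card_pos.mp (by omega))
  refine ⟨a, ha, ?_⟩
  have h1 := Finset.card_nsmul_le_sum _ _ _ hmin
  rw [Finset.sum_add_distrib] at h1
  have h2 := subVar_ge ch f s
  rw [nodeVar, if_pos hs] at h2
  have h3 := h1.trans h2
  have h4 : (3 : ENNReal) * (ENNReal.ofReal ((3 : ℝ)⁻¹ ^ (s.length + 1) * |f (s ++ [a]) - f s|)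
      + subVar ch f (s ++ [a])) ≤ subVar ch f s := by
    refine le_trans ?_ h3
    rw [nsmul_eq_mul]
    gcongr
    exact_mod_cast hc
  have h5 : ENNReal.ofReal |f (s ++ [a]) - f s| = 3 ^ (s.length + 1) *
      ENNReal.ofReal ((3 : ℝ)⁻¹ ^ (s.length + 1) * |f (s ++ [a]) - f s|) := by
    have : (3 : ENNReal) ^ (s.length + 1) = ENNReal.ofReal (3 ^ (s.length + 1)) := by
      rw [ENNReal.ofReal_pow (by norm_num)]; simp
    rw [this, ← ENNReal.ofReal_mul (by positivity), ← mul_assoc, ← mul_pow]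
    norm_num
  rw [h5, ← mul_add, pow_succ, mul_assoc]
  gcongr

theorem subVar_bound (ch : List ℕ → Finset ℕ)
    (hcard : ∀ s : List ℕ, IsVertex ch s → 3 ≤ (ch s).card)
    (A₀ : List ℕ) (hA₀ : IsVertex ch A₀) (c : ℝ) (f : List ℕ → ℝ)
    (hconv : ∀ x : ℕ → ℕ, IsBranch ch x → PassesThrough x A₀ → ConvergesAlong f x c) :
    ENNReal.ofReal |c - f A₀| ≤ 3 ^ A₀.length * subVar ch f A₀ := by
  classical
  have hstep : ∀ s, ∃ a, IsVertex ch s → a ∈ ch s ∧ ENNReal.ofReal |f (s ++ [a]) - f s|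
      + 3 ^ (s.length + 1) * subVar ch f (s ++ [a]) ≤ 3 ^ s.length * subVar ch f s := by
    intro s
    by_cases hs : IsVertex ch s
    · obtain ⟨a, h1, h2⟩ := exists_step ch f s hs (hcard s hs)
      exact ⟨a, fun _ => ⟨h1, h2⟩⟩
    · exact ⟨0, fun h => absurd h hs⟩
  choose g hg using hstep
  obtain ⟨S, S0, Ss⟩ : ∃ S : ℕ → List ℕ, S 0 = A₀ ∧ ∀ n, S (n+1) = S n ++ [g (S n)] :=
    ⟨fun n => Nat.rec A₀ (fun _ s => s ++ [g s]) n, rfl, fun _ => rfl⟩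
  have Sv : ∀ n, IsVertex ch (S n) := by
    intro n
    induction n with
    | zero => rw [S0]; exact hA₀
    | succ n ih => rw [Ss]; exact IsVertex.append _ _ ih (hg _ ih).1
  have Sl : ∀ n, (S n).length = A₀.length + n := by
    intro n
    induction n with
    | zero => rw [S0]; rfl
    | succ n ih => rw [Ss]; simp [ih]; omega
  have Sb : ∀ n, ENNReal.ofReal |f (S n) - f A₀| + 3 ^ (S n).length * subVar ch f (S n)
      ≤ 3 ^ A₀.length * subVar ch f A₀ := by
    intro n
    induction n with
    | zero => simp [S0]
    | succ n ih =>
      refine le_trans ?_ ih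
      have h := (hg _ (Sv n)).2
      rw [← Ss] at h
      have h1 : ENNReal.ofReal |f (S (n+1)) - f A₀| ≤
          ENNReal.ofReal |f (S n) - f A₀| + ENNReal.ofReal |f (S (n+1)) - f (S n)| := by
        rw [← ENNReal.ofReal_add (abs_nonneg _) (abs_nonneg _)]
        apply ENNReal.ofReal_le_ofReal
        linarith [abs_sub_le (f (S (n+1))) (f (S n)) (f A₀)]
      have h2 : (S (n+1)).length = (S n).length + 1 := by simp [Sl]; omega
      refine le_trans (add_le_add_left h1 _) ?_
      rw [add_assoc, h2]
      gcongr
  have Sp : ∀ n m, n ≤ m → S n <+: S m := by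
    intro n m h
    induction m, h using Nat.le_induction with
    | base => exact List.prefix_rfl
    | succ m _ ih => rw [Ss]; exact ih.trans (List.prefix_append _ _)
  let x : ℕ → ℕ := fun i => (S (i+1)).getD i 0
  have hx : ∀ n i, i < (S n).length → (S n)[i]? = some (x i) := by
    intro n i hi
    have hi' : i < (S (i+1)).length := by rw [Sl]; omega
    have : x i = (S (i+1))[i] := by simp [x, List.getD_eq_getElem?_getD, hi']
    rw [this]
    rcases le_total n (i+1) with h | h
    · rw [← List.getElem?_eq_getElem hi']
      rw [List.getElem?_eq_getElem hi, List.getElem?_eq_getElem hi', (Sp _ _ h).getElem hi]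
    · rw [List.getElem?_eq_getElem hi, (Sp _ _ h).getElem hi']
  have hof : ∀ n, List.ofFn (fun i : Fin (S n).length => x i) = S n := by
    intro n
    apply List.ext_getElem?
    intro i
    by_cases hi : i < (S n).length
    · rw [hx n i hi]; simp [hi]
    · simp [hi]
  have hof' : ∀ n, List.ofFn (fun i : Fin (A₀.length + n) => x i) = S n := by
    intro n
    rw [← Sl n]; exact hof n
  have hbr0 : ∀ m n, IsVertex ch (List.ofFn (fun i : Fin (n+m) => x i)) →
      IsVertex ch (List.ofFn (fun i : Fin n => x i)) := by
    intro m
    induction m with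
    | zero => intro n h; exact h
    | succ m ih =>
      intro n h
      apply ih
      rw [← add_assoc, List.ofFn_succ_last] at h
      generalize hq : List.ofFn _ ++ [_] = q at h
      cases h with
      | nil => simp at hq
      | append s a hs ha =>
        have := (List.append_inj' hq rfl).1
        rw [← this] at hs
        exact hs
  have hbr : IsBranch ch x := by
    intro n
    apply hbr0 A₀.length n
    rw [add_comm, hof']
    exact Sv n
  have hlim := hconv x hbr (by have h := (hof 0).symm; rw [S0] at h; exact h)
  have hlim2 : Filter.Tendsto (fun n => f (S n)) Filter.atTop (nhds c) := by
    have := hlim.comp (Filter.tendsto_add_atTop_nat A₀.length)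
    refine this.congr fun n => ?_
    simp only [Function.comp]
    rw [add_comm, hof']
  have hlim3 : Filter.Tendsto (fun n => ENNReal.ofReal |f (S n) - f A₀|) Filter.atTop
      (nhds (ENNReal.ofReal |c - f A₀|)) :=
    ENNReal.tendsto_ofReal ((hlim2.sub_const _).abs)
  exact le_of_tendsto' hlim3 fun n => le_self_add.trans (Sb n)

/-- Cut lemma for weighted trees: if every vertex has at least 3 children and `f` converges
to `c` along every branch passing through the vertex `A₀`, then replacing `f` by the constant
`c` on the whole subtree below `A₀` does not increase the weighted tree variation. -/
theorem treeVar_cut_le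
    (children : List ℕ → Finset ℕ)
    (hcard : ∀ s : List ℕ, IsVertex children s → 3 ≤ (children s).card)
    (A₀ : List ℕ) (hA₀ : IsVertex children A₀) (c : ℝ) (f : List ℕ → ℝ)
    (hconv : ∀ x : ℕ → ℕ, IsBranch children x → PassesThrough x A₀ →
      ConvergesAlong f x c) :
    treeVar children (fun s => if A₀ <+: s then c else f s) ≤ treeVar children f := by
  classical
  rw [treeVar_eq, treeVar_eq]
  have hb := subVar_bound children hcard A₀ hA₀ c f hconv
  have hz : ∀ s, A₀ <+: s →
      nodeVar children (fun s => if A₀ <+: s then c else f s) s = 0 := by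
    intro s hs
    have h1 : ∀ a, A₀ <+: s ++ [a] := fun a => hs.trans (List.prefix_append _ _)
    simp [nodeVar, hs, h1]
  rcases List.eq_nil_or_concat A₀ with rfl | ⟨B, b, hB⟩
  · rw [tsum_congr fun s => hz s (List.nil_prefix)]
    simp
  let D : ENNReal := ENNReal.ofReal ((3 : ℝ)⁻¹ ^ A₀.length * |c - f A₀|)
  have hD : D ≤ subVar children f A₀ := by
    have h3 : ENNReal.ofReal ((3 : ℝ)⁻¹ ^ A₀.length) * 3 ^ A₀.length = 1 := by
      have : (3 : ENNReal) ^ A₀.length = ENNReal.ofReal (3 ^ A₀.length) := by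
        rw [ENNReal.ofReal_pow (by norm_num)]; simp
      rw [this, ← ENNReal.ofReal_mul (by positivity), ← mul_pow]
      norm_num
    calc D = ENNReal.ofReal ((3 : ℝ)⁻¹ ^ A₀.length) * ENNReal.ofReal |c - f A₀| :=
          ENNReal.ofReal_mul (by positivity)
      _ ≤ ENNReal.ofReal ((3 : ℝ)⁻¹ ^ A₀.length) * (3 ^ A₀.length * subVar children f A₀) := by
          gcongr
      _ = _ := by rw [← mul_assoc, h3, one_mul]
  have hD2 : subVar children f A₀ ≤ ∑' s, if A₀ <+: s then nodeVar children f s else 0 := by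
    refine le_trans (le_of_eq ?_) (ENNReal.tsum_comp_le_tsum_of_injective
      (List.append_right_injective A₀) (fun s => if A₀ <+: s then nodeVar children f s else 0))
    exact tsum_congr fun r => by simp
  have hpt : ∀ s, nodeVar children (fun s => if A₀ <+: s then c else f s) s ≤
      (if A₀ <+: s then 0 else nodeVar children f s) + (if s = B then D else 0) := by
    intro s
    by_cases hs : A₀ <+: s
    · rw [hz s hs]; exact zero_le
    by_cases hv : IsVertex children s
    swap
    · simp [nodeVar, hv]
    simp only [nodeVar, if_neg hs, if_pos hv]
    have hch : ∀ a, A₀ <+: s ++ [a] ↔ s = B ∧ a = b := by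
      intro a
      rw [List.prefix_concat_iff, or_iff_left hs, hB, List.concat_eq_append]
      constructor
      · intro h
        have := List.append_inj' h rfl
        exact ⟨this.1.symm, by simpa using this.2.symm⟩
      · rintro ⟨rfl, rfl⟩; rfl
    have hAB : A₀ = B ++ [b] := by rw [hB, List.concat_eq_append]
    have hterm : ∀ a ∈ children s, ENNReal.ofReal ((3 : ℝ)⁻¹ ^ (s.length + 1) *
        |(if A₀ <+: s ++ [a] then c else f (s ++ [a])) - f s|) ≤
        ENNReal.ofReal ((3 : ℝ)⁻¹ ^ (s.length + 1) * |f (s ++ [a]) - f s|) +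
          (if a = b then (if s = B then D else 0) else 0) := by
      intro a _
      by_cases h : A₀ <+: s ++ [a]
      · rw [if_pos h]
        obtain ⟨rfl, rfl⟩ := (hch a).1 h
        simp only [if_true, D]
        rw [← ENNReal.ofReal_add (by positivity) (by positivity)]
        apply ENNReal.ofReal_le_ofReal
        have hl : A₀.length = s.length + 1 := by rw [hAB]; simp
        rw [hl, ← mul_add, hAB]
        gcongr
        linarith [abs_sub_le c (f (s ++ [a])) (f s)]
      · rw [if_neg h]; exact le_self_add
    refine (Finset.sum_le_sum hterm).trans ?_
    rw [Finset.sum_add_distrib]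
    gcongr
    rw [Finset.sum_ite_eq']
    split_ifs <;> simp
  refine le_trans (ENNReal.tsum_le_tsum hpt) ?_
  calc _ = (∑' s, if A₀ <+: s then 0 else nodeVar children f s) + D := by
        rw [ENNReal.tsum_add, tsum_ite_eq]
    _ ≤ (∑' s, if A₀ <+: s then 0 else nodeVar children f s) +
        ∑' s, if A₀ <+: s then nodeVar children f s else 0 := by
        gcongr
        exact hD.trans hD2
    _ = _ := by
        rw [← ENNReal.tsum_add]
        refine tsum_congr fun s => ?_
        split_ifs <;> simp
end

section
/- (Weighted comparison of horizontal and vertical differences in a graded graph.) Let (D_n)_{n∈ℕ} be a family of pairwise disjoint countable sets of vertices with D_0 a singleton, let p : D_{n+1} → D_n (for each n) be a parent map, and for each n let H_n be a symmetric irreflexive relation on D_n, with H_0 empty. Assume: (i) every A ∈ D_n is H_n-related to at most 2 vertices; (ii) whenever (A,B) ∈ H_n with n ≥ 1, either p A = p B or (p A, p B) ∈ H_{n−1}; (iii) for every pair (P,Q) ∈ H_{n−1}, there are at most 2 unordered pairs {A,B} with (A,B) ∈ H_n, p A = P and p B = Q. Then for every real-valued function f on the union of the D_n, Σ_{n≥1}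 Σ_{unordered pairs {A,B} with (A,B) ∈ H_n} 3^{−n} |f A − f B| ≤ 6 · Σ_{n≥1} Σ_{A ∈ D_n} 3^{−n} |f A − f (p A)|, as an inequality in [0,∞]. -/
open scoped ENNReal in
theorem hv_fiber {α β : Type*} (E : Set α) (E' : Set β) (π : α → β) (F : β → ℝ≥0∞)
    (h : ∀ e ∈ E, F (π e) = 0 ∨ π e ∈ E')
    (hc : ∀ e' ∈ E', {e | e ∈ E ∧ π e = e'}.encard ≤ 2) :
    ∑' e : E, F (π e) ≤ 2 * ∑' e' : E', F e' := by
  classical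
  calc ∑' e : E, F (π e) ≤ ∑' e : E, ∑' e' : E', (if π e = e' then F e' else 0) := by
        refine ENNReal.tsum_le_tsum fun e => ?_
        rcases h e e.2 with h0 | h1
        · simp [h0]
        · refine le_trans ?_ (ENNReal.le_tsum (⟨π e, h1⟩ : E'))
          simp
    _ = ∑' e' : E', ∑' e : E, (if π e = e' then F e' else 0) := ENNReal.tsum_comm
    _ ≤ ∑' e' : E', 2 * F e' := by
        refine ENNReal.tsum_le_tsum fun e' => ?_
        have h1 : ∑' e : E, (if π e = e' then F e' else 0)
            = ∑' e : {e | e ∈ E ∧ π e = e'}, F e' := by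
          rw [tsum_subtype E (fun e => if π e = e' then F e' else 0),
            tsum_subtype {e | e ∈ E ∧ π e = e'} (fun _ => F e')]
          congr 1
          ext e
          by_cases h1 : e ∈ E <;> by_cases h2 : π e = e' <;> simp [Set.indicator, h1, h2]
        rw [h1, ENNReal.tsum_set_const]
        gcongr
        exact_mod_cast hc e' e'.2
    _ = 2 * ∑' e' : E', F e' := ENNReal.tsum_mul_left

open scoped ENNReal in
theorem hv_deg {V : Type*} (D : Set V) (R : V → V → Prop)
    (hirr : ∀ A, ¬ R A A) (hsymm : ∀ A B, R A B → R B A)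
    (hmem : ∀ A B, R A B → A ∈ D) (hdeg : ∀ A, {B | R A B}.encard ≤ 2)
    (g : V → ℝ≥0∞) (G : Sym2 V → ℝ≥0∞) (hG : ∀ A B, G s(A, B) = g A + g B) :
    ∑' e : {e : Sym2 V // ∃ A B, e = s(A, B) ∧ R A B}, G e.1 ≤ 2 * ∑' A : D, g A := by
  classical
  choose a b hab hR using fun e : {e : Sym2 V // ∃ A B, e = s(A, B) ∧ R A B} => e.2
  let S : Set (V × V) := {x | R x.1 x.2}
  let φ : {e : Sym2 V // ∃ A B, e = s(A, B) ∧ R A B} ⊕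
      {e : Sym2 V // ∃ A B, e = s(A, B) ∧ R A B} → S :=
    Sum.elim (fun e => ⟨(a e, b e), hR e⟩) (fun e => ⟨(b e, a e), hsymm _ _ (hR e)⟩)
  have key : ∀ e e', s(a e, b e) = s(a e', b e') → e = e' := fun e e' h =>
    Subtype.ext (by rw [hab e, hab e', h])
  have hφ : Function.Injective φ := by
    rintro (e | e) (e' | e') h <;>
      simp only [φ, Sum.elim_inl, Sum.elim_inr, Subtype.mk.injEq, Prod.mk.injEq] at h
    · rw [key e e' (by rw [h.1, h.2])]
    · have := key e e' (by rw [h.1, h.2, Sym2.eq_swap])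
      subst this
      exact absurd (hR e) (by rw [h.1]; exact hirr _)
    · have := key e e' (by rw [h.1, h.2, Sym2.eq_swap])
      subst this
      exact absurd (hR e) (by rw [h.1]; exact hirr _)
    · rw [key e e' (by rw [h.1, h.2])]
  have h1 : ∑' e : {e : Sym2 V // ∃ A B, e = s(A, B) ∧ R A B}, G e.1
      = ∑' x, g (φ x).1.1 := by
    rw [ENNReal.summable.tsum_sum ENNReal.summable, ← ENNReal.tsum_add]
    refine tsum_congr fun e => ?_
    rw [hab e, hG]
    rfl
  rw [h1]
  refine (ENNReal.tsum_comp_le_tsum_of_injective hφ (fun x : S => g x.1.1)).trans ?_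
  refine hv_fiber S D Prod.fst g (fun x hx => Or.inr (hmem _ _ hx)) fun A _ => ?_
  have : {e : V × V | e ∈ S ∧ e.1 = A} = (fun B => (A, B)) '' {B | R A B} := by
    ext ⟨x, y⟩
    simp only [S, Set.mem_setOf_eq, Set.mem_image, Prod.mk.injEq]
    constructor
    · rintro ⟨h, rfl⟩
      exact ⟨y, h, rfl, rfl⟩
    · rintro ⟨B, h, rfl, rfl⟩
      exact ⟨h, rfl⟩
  rw [this]
  exact (Set.encard_image_le _ _).trans (hdeg A)

open scoped ENNReal in
theorem hv_sum (a b : ℕ → ℝ≥0∞) (h0 : a 0 = 0)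
    (h : ∀ n, 3 * a (n + 1) ≤ 6 * b n + 2 * a n) :
    ∑' n, a (n + 1) ≤ 6 * ∑' n, b n := by
  have key : ∀ N, ∑ n ∈ Finset.range N, a (n + 1) ≤ 6 * ∑ n ∈ Finset.range N, b n := by
    intro N
    induction N with
    | zero => simp
    | succ N ih =>
      have h1 : 3 * ∑ n ∈ Finset.range (N + 1), a (n + 1)
          ≤ 3 * (6 * ∑ n ∈ Finset.range (N + 1), b n) := by
        calc 3 * ∑ n ∈ Finset.range (N + 1), a (n + 1)
            ≤ ∑ n ∈ Finset.range (N + 1), (6 * b n + 2 * a n) := by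
              rw [Finset.mul_sum]
              exact Finset.sum_le_sum fun n _ => h n
          _ = 6 * ∑ n ∈ Finset.range (N + 1), b n
              + 2 * ∑ n ∈ Finset.range N, a (n + 1) := by
              rw [Finset.sum_add_distrib, ← Finset.mul_sum, ← Finset.mul_sum,
                Finset.sum_range_succ' a, h0, add_zero]
          _ ≤ 6 * ∑ n ∈ Finset.range (N + 1), b n
              + 2 * (6 * ∑ n ∈ Finset.range (N + 1), b n) := by
              gcongr
              refine ih.trans ?_
              gcongr
              omega
          _ = 3 * (6 * ∑ n ∈ Finset.range (N + 1), b n) := by ring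
      exact (ENNReal.mul_le_mul_iff_right (by norm_num) (by norm_num)).1 h1
  rw [ENNReal.tsum_eq_iSup_nat]
  refine iSup_le fun N => (key N).trans ?_
  gcongr
  exact ENNReal.sum_le_tsum _

/-- Weighted comparison of horizontal and vertical differences in a graded graph: under the
degree and compatibility assumptions (i)–(iii), the weighted sum (weights `3^{−n}` at
generation `n`) over horizontal edges (unordered pairs, counted once) is at most `6` times
the weighted sum over parent–child edges, as an inequality in `[0,∞]`. -/
theorem horizontal_le_vertical
    (V : Type*) (D : ℕ → Set V)
    (hcount : ∀ n : ℕ, (D n).Countable)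
    (hdisj : ∀ m n : ℕ, m ≠ n → Disjoint (D m) (D n))
    (hD0 : ∃ v : V, D 0 = {v})
    (p : V → V) (hp : ∀ n : ℕ, ∀ A ∈ D (n + 1), p A ∈ D n)
    (H : ℕ → V → V → Prop)
    (hsymm : ∀ n A B, H n A B → H n B A)
    (hirr : ∀ n A, ¬ H n A A)
    (hmem : ∀ n A B, H n A B → A ∈ D n ∧ B ∈ D n)
    (hH0 : ∀ A B, ¬ H 0 A B)
    (hdeg : ∀ n A, {B | H n A B}.encard ≤ 2)
    (hpar : ∀ n A B, H (n + 1) A B → p A = p B ∨ H n (p A) (p B))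
    (hmult : ∀ n P Q, H n P Q →
      {e : Sym2 V | ∃ A B, e = s(A, B) ∧ H (n + 1) A B ∧ p A = P ∧ p B = Q}.encard ≤ 2)
    (f : V → ℝ) :
    ∑' (n : ℕ) (e : {e : Sym2 V // ∃ A B, e = s(A, B) ∧ H (n + 1) A B}),
        Sym2.lift ⟨fun A B => ENNReal.ofReal ((3 : ℝ)⁻¹ ^ (n + 1) * |f A - f B|),
          fun A B => by simp [abs_sub_comm]⟩ e.1
      ≤ 6 * ∑' (n : ℕ) (A : D (n + 1)),
          ENNReal.ofReal ((3 : ℝ)⁻¹ ^ (n + 1) * |f A - f (p A)|) := by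
  classical
  let F : ℕ → Sym2 V → ENNReal := fun n =>
    Sym2.lift ⟨fun A B => ENNReal.ofReal ((3 : ℝ)⁻¹ ^ n * |f A - f B|),
          fun A B => by simp [abs_sub_comm]⟩
  have hF : ∀ n A B, F n s(A, B) = ENNReal.ofReal ((3 : ℝ)⁻¹ ^ n * |f A - f B|) :=
    fun _ _ _ => rfl
  let g : ℕ → V → ENNReal := fun n A => ENNReal.ofReal ((3 : ℝ)⁻¹ ^ n * |f A - f (p A)|)
  let G : ℕ → Sym2 V → ENNReal := fun n =>
    Sym2.lift ⟨fun A B => g n A + g n B, fun A B => add_comm _ _⟩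
  let E : ℕ → Set (Sym2 V) := fun n => {e | ∃ A B, e = s(A, B) ∧ H n A B}
  refine hv_sum (fun n => ∑' e : E n, F n e.1) (fun n => ∑' A : D (n + 1), g (n + 1) A) ?_ ?_
  · have : IsEmpty (E 0) := ⟨fun ⟨e, A, B, _, h⟩ => hH0 A B h⟩
    simp
  intro n
  have hpt : ∀ e : Sym2 V, 3 * F (n + 1) e ≤ 3 * G (n + 1) e + F n (e.map p) := by
    intro e
    induction e using Sym2.ind with
    | _ A B =>
      rw [Sym2.map_mk]
      simp only [hF]
      change _ ≤ 3 * (g (n + 1) A + g (n + 1) B) + _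
      simp only [g]
      have h3 : (3 : ENNReal) = ENNReal.ofReal 3 := by simp
      rw [h3, ← ENNReal.ofReal_add (by positivity) (by positivity),
        ← ENNReal.ofReal_mul (by norm_num), ← ENNReal.ofReal_mul (by norm_num),
        ← ENNReal.ofReal_add (by positivity) (by positivity)]
      apply ENNReal.ofReal_le_ofReal
      have ht : |f A - f B| ≤ |f A - f (p A)| + |f B - f (p B)| + |f (p A) - f (p B)| := by
        have h1 := abs_sub_le (f A) (f (p A)) (f B)
        have h2 := abs_sub_le (f (p A)) (f (p B)) (f B)
        rw [abs_sub_comm (f (p B)) (f B)] at h2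
        linarith
      have hw : (0 : ℝ) ≤ (3 : ℝ)⁻¹ ^ n := by positivity
      have := mul_le_mul_of_nonneg_left ht hw
      rw [pow_succ]
      linarith
  have hV : ∑' e : E (n + 1), G (n + 1) e.1 ≤ 2 * ∑' A : D (n + 1), g (n + 1) A :=
    hv_deg (D (n + 1)) (H (n + 1)) (hirr _) (hsymm _) (fun A B h => (hmem _ A B h).1)
      (hdeg _) (g (n + 1)) (G (n + 1)) (fun _ _ => rfl)
  have hHor : ∑' e : E (n + 1), F n (Sym2.map p e.1) ≤ 2 * ∑' e : E n, F n e.1 := by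
    refine hv_fiber (E (n + 1)) (E n) (Sym2.map p) (F n) ?_ ?_
    · rintro e ⟨A, B, rfl, h⟩
      rw [Sym2.map_mk]
      rcases hpar n A B h with h | h
      · left
        simp [hF, h]
      · exact Or.inr ⟨_, _, rfl, h⟩
    · rintro e' ⟨P, Q, rfl, h⟩
      refine (Set.encard_le_encard ?_).trans (hmult n P Q h)
      rintro e ⟨⟨A, B, rfl, hAB⟩, he⟩
      rw [Sym2.map_mk, Sym2.eq_iff] at he
      rcases he with he | he
      · exact ⟨A, B, rfl, hAB, he.1, he.2⟩
      · exact ⟨B, A, Sym2.eq_swap, hsymm _ _ _ hAB, he.2, he.1⟩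
  calc 3 * ∑' e : E (n + 1), F (n + 1) e.1
      = ∑' e : E (n + 1), 3 * F (n + 1) e.1 := ENNReal.tsum_mul_left.symm
    _ ≤ ∑' e : E (n + 1), (3 * G (n + 1) e.1 + F n (Sym2.map p e.1)) :=
        ENNReal.tsum_le_tsum fun e => hpt e.1
    _ = 3 * ∑' e : E (n + 1), G (n + 1) e.1 + ∑' e : E (n + 1), F n (Sym2.map p e.1) := by
        rw [ENNReal.tsum_add, ENNReal.tsum_mul_left]
    _ ≤ 3 * (2 * ∑' A : D (n + 1), g (n + 1) A) + 2 * ∑' e : E n, F n e.1 := by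
        gcongr
    _ = 6 * ∑' A : D (n + 1), g (n + 1) A + 2 * ∑' e : E n, F n e.1 := by ring
end
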